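/- If DC holds, then for every integer k ≥ 3 one has L_k^2 ≥ L_{k−1} · L_{k+1}, where the inequality and product are taken in the extended nonnegative reals [0, +∞]. -/

import Mathlib

open Filter Topology
open scoped ENNReal

/-- `N` has the Ramsey property for the tuple `k`: every `r`-coloring of the
edges of the complete graph on `N` vertices admits a color `i` and a set of
`k i` vertices all of whose connecting edges have color `i`. -/
def ramseyProp {r : ℕ} (k : Fin r → ℕ) (N : ℕ) : Prop :=
  ∀ c : Sym2 (Fin N) → Fin r, ∃ i : Fin r, ∃ S : Finset (Fin N),
    S.card = k i ∧ ∀ u ∈ S, ∀ v ∈ S, u ≠ v → c s(u, v) = i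

/-- The multicolor Ramsey number `R(k 0, …, k (r-1))`: the least positive `N`
with the Ramsey property. -/
noncomputable def multiRamsey {r : ℕ} (k : Fin r → ℕ) : ℕ :=
  sInf {N | 0 < N ∧ ramseyProp k N}

/-- The diagonal multicolor Ramsey number `R_r(k)`. -/
noncomputable def diagRamsey (r k : ℕ) : ℕ :=
  multiRamsey (fun _ : Fin r => k)

/-- DC, the "decreasing conjecture". -/
def DC : Prop :=
  ∀ (r : ℕ), 2 ≤ r → ∀ k : Fin r → ℕ, (∀ l, 2 ≤ k l) →
    ∀ i j : Fin r, i ≠ j → 3 ≤ k i → k i ≤ k j →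
      multiRamsey (fun l => if l = i then k i - 1 else if l = j then k j + 1 else k l)
        ≤ multiRamsey k

/-!
Split `2r` colors into two blocks of size `r`. Applying DC once to each of `r` disjoint pairs of
colors, one from each block, turns `R_{2r}(k)` into a Ramsey number with `r` entries `k - 1` and
`r` entries `k + 1`. The lexicographic product of extremal colorings for the two blocks bounds the
latter below by `(R_r(k-1) - 1) (R_r(k+1) - 1)`, so `R_r(k-1) R_r(k+1) ≤ 4 R_{2r}(k)`.
Taking `r`-th roots removes the constant, and the `r`-th root of `R_{2r}(k)` tends to `L_k²`.
-/

section ColorGraph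

variable {V W C D : Type*}

theorem cliqueFree_of_hom {n : ℕ} {G : SimpleGraph V} {H : SimpleGraph W}
    (f : G →g H) (hH : H.CliqueFree n) : G.CliqueFree n := by
  contrapose! hH
  obtain ⟨g⟩ := (SimpleGraph.not_cliqueFree_iff_top_isContained n).1 hH
  exact (SimpleGraph.not_cliqueFree_iff_top_isContained n).2
    ⟨(f.comp g.toHom).toCopy (f.comp g.toHom).injective_of_top_hom⟩

/-- The color class of `i` in an edge coloring `c` of the complete graph on `V`, as a graph, so that
monochromatic sets become cliques. The colors that `c` gives to loops are ignored. -/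
def colorGraph (c : Sym2 V → C) (i : C) : SimpleGraph V :=
  SimpleGraph.fromEdgeSet (c ⁻¹' {i})

@[simp]
theorem colorGraph_adj {c : Sym2 V → C} {i : C} {u v : V} :
    (colorGraph c i).Adj u v ↔ c s(u, v) = i ∧ u ≠ v :=
  SimpleGraph.fromEdgeSet_adj _

theorem isClique_colorGraph_iff {c : Sym2 V → C} {i : C} {S : Set V} :
    (colorGraph c i).IsClique S ↔ ∀ u ∈ S, ∀ v ∈ S, u ≠ v → c s(u, v) = i := by
  simp +contextual only [SimpleGraph.isClique_iff, Set.Pairwise, colorGraph_adj, ne_eq,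
    not_false_eq_true, and_true]

theorem colorGraph_comp_map (c : Sym2 W → C) (f : V ↪ W) (i : C) :
    colorGraph (c ∘ Sym2.map f) i = (colorGraph c i).comap f := by
  ext u v
  simp

theorem colorGraph_comp_apply {e : C → D} (he : e.Injective) (c : Sym2 V → C) (i : C) :
    colorGraph (e ∘ c) (e i) = colorGraph c i := by
  ext u v
  simp [he.eq_iff]

open Classical in
/-- The lexicographic product of two edge colorings, with disjoint palettes: an edge of `V × W` is
colored by `c` according to its first coordinates if these differ, and otherwise by `d` according
to its second coordinates. -/
noncomputable def lexColoring (c : Sym2 V → C) (d : Sym2 W → D) (e : Sym2 (V × W)) : C ⊕ D :=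
  if (e.map Prod.fst).IsDiag then .inr (d (e.map Prod.snd)) else .inl (c (e.map Prod.fst))

variable {c : Sym2 V → C} {d : Sym2 W → D} {n : ℕ}

theorem colorGraph_lexColoring_inl_adj {i : C} {x y : V × W} :
    (colorGraph (lexColoring c d) (.inl i)).Adj x y ↔ (colorGraph c i).Adj x.1 y.1 := by
  by_cases h : x.1 = y.1 <;> simp [lexColoring, h, Prod.ext_iff]

theorem colorGraph_lexColoring_inr_adj {j : D} {x y : V × W} :
    (colorGraph (lexColoring c d) (.inr j)).Adj x y ↔
      x.1 = y.1 ∧ (colorGraph d j).Adj x.2 y.2 := by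
  by_cases h : x.1 = y.1 <;> simp [lexColoring, h, Prod.ext_iff]

theorem cliqueFree_lexColoring_inl {i : C} (h : (colorGraph c i).CliqueFree n) :
    (colorGraph (lexColoring c d) (.inl i)).CliqueFree n :=
  cliqueFree_of_hom ⟨Prod.fst, fun hxy => colorGraph_lexColoring_inl_adj.1 hxy⟩ h

theorem cliqueFree_lexColoring_inr {j : D} (h : (colorGraph d j).CliqueFree n) :
    (colorGraph (lexColoring c d) (.inr j)).CliqueFree n :=
  cliqueFree_of_hom ⟨Prod.snd, fun hxy => (colorGraph_lexColoring_inr_adj.1 hxy).2⟩ h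

end ColorGraph

section RamseyProp

variable {r s : ℕ} {k : Fin r → ℕ} {l : Fin s → ℕ} {M N : ℕ}

theorem ramseyProp_iff_exists_isNClique :
    ramseyProp k N ↔
      ∀ c : Sym2 (Fin N) → Fin r, ∃ i, ∃ S, (colorGraph c i).IsNClique (k i) S := by
  simp only [ramseyProp, SimpleGraph.isNClique_iff, isClique_colorGraph_iff, Finset.mem_coe,
    and_comm]

theorem not_ramseyProp_iff_exists_cliqueFree :
    ¬ ramseyProp k N ↔
      ∃ c : Sym2 (Fin N) → Fin r, ∀ i, (colorGraph c i).CliqueFree (k i) := by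
  simp only [ramseyProp_iff_exists_isNClique, SimpleGraph.CliqueFree, not_forall, not_exists]

theorem ramseyProp.exists_isNClique (h : ramseyProp k N) {V : Type*} {T : Finset V}
    (hT : N ≤ T.card) (c : Sym2 V → Fin r) :
    ∃ i, ∃ S ⊆ T, (colorGraph c i).IsNClique (k i) S := by
  obtain ⟨f⟩ : Nonempty (Fin N ↪ T) := Function.Embedding.nonempty_of_card_le (by simpa using hT)
  let g : Fin N ↪ V := f.trans (Function.Embedding.subtype _)
  obtain ⟨i, S, hS⟩ := ramseyProp_iff_exists_isNClique.1 h (c ∘ Sym2.map g)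
  rw [colorGraph_comp_map] at hS
  refine ⟨i, S.map g, fun v hv => ?_, hS.map.mono (SimpleGraph.map_comap_le _ _)⟩
  obtain ⟨u, -, rfl⟩ := Finset.mem_map.1 hv
  exact (f u).2

theorem ramseyProp.mono (h : ramseyProp k M) (hMN : M ≤ N) : ramseyProp k N := by
  refine ramseyProp_iff_exists_isNClique.2 fun c => ?_
  obtain ⟨i, S, -, hS⟩ := h.exists_isNClique (T := Finset.univ) (by simpa using hMN) c
  exact ⟨i, S, hS⟩

/-- Pigeonhole on the colors of the edges at a vertex `v`: for some `i`, at least `N i` of them have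
color `i`, and a clique of color `i` among their endpoints is extended by `v`. -/
theorem ramseyProp_sum_add_one {N : Fin r → ℕ} (hk : ∀ i, 0 < k i)
    (h : ∀ i, ramseyProp (Function.update k i (k i - 1)) (N i)) :
    ramseyProp k (∑ i, N i + 1) := by
  refine ramseyProp_iff_exists_isNClique.2 fun c => ?_
  let v : Fin (∑ i, N i + 1) := 0
  let T (i : Fin r) : Finset (Fin (∑ i, N i + 1)) := {u ∈ Finset.univ.erase v | c s(v, u) = i}
  have hsum : ∑ i, N i ≤ ∑ i, (T i).card := by
    rw [← Finset.card_eq_sum_card_fiberwise fun _ _ => Finset.mem_coe.2 (Finset.mem_univ _)]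
    simp
  obtain ⟨i, -, hi⟩ := Finset.exists_le_of_sum_le ⟨c s(v, v), Finset.mem_univ _⟩ hsum
  obtain ⟨j, S, hST, hS⟩ := (h i).exists_isNClique hi c
  obtain rfl | hji := eq_or_ne j i
  · have hadj : ∀ u ∈ S, (colorGraph c j).Adj v u := fun u hu => by
      obtain ⟨huv, hcolor⟩ := Finset.mem_filter.1 (hST hu)
      exact colorGraph_adj.2 ⟨hcolor, (Finset.ne_of_mem_erase huv).symm⟩
    rw [Function.update_self] at hS
    exact ⟨j, insert v S, Nat.sub_add_cancel (hk j) ▸ hS.insert hadj⟩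
  · exact ⟨j, S, by rwa [Function.update_of_ne hji] at hS⟩

theorem exists_ramseyProp (k : Fin r → ℕ) : ∃ N, ramseyProp k N := by
  induction k using WellFoundedLT.induction with
  | ind k ih =>
  by_cases hk : ∀ i, 0 < k i
  · choose N hN using fun i => ih _ (update_lt_self_iff.2 (Nat.sub_one_lt_of_lt (hk i)))
    exact ⟨_, ramseyProp_sum_add_one hk hN⟩
  · push Not at hk
    obtain ⟨i, hi⟩ := hk
    exact ⟨0, fun c => ⟨i, ∅, by simp [Nat.le_zero.1 hi], by simp⟩⟩

theorem not_ramseyProp_append (hM : ¬ ramseyProp k M) (hN : ¬ ramseyProp l N) :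
    ¬ ramseyProp (Fin.append k l) (M * N) := by
  obtain ⟨c, hc⟩ := not_ramseyProp_iff_exists_cliqueFree.1 hM
  obtain ⟨d, hd⟩ := not_ramseyProp_iff_exists_cliqueFree.1 hN
  intro h
  obtain ⟨i, S, -, hS⟩ := h.exists_isNClique (T := Finset.univ) (by simp)
    (finSumFinEquiv ∘ lexColoring c d)
  obtain ⟨i | j, rfl⟩ := finSumFinEquiv.surjective i <;>
    rw [colorGraph_comp_apply finSumFinEquiv.injective] at hS
  · exact cliqueFree_lexColoring_inl (hc i) S (by simpa using hS)
  · exact cliqueFree_lexColoring_inr (hd j) S (by simpa using hS)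

end RamseyProp

section MultiRamsey

variable {r s N : ℕ} {k : Fin r → ℕ}

theorem multiRamsey_mem (k : Fin r → ℕ) : multiRamsey k ∈ {N | 0 < N ∧ ramseyProp k N} := by
  obtain ⟨N, hN⟩ := exists_ramseyProp k
  exact Nat.sInf_mem ⟨N + 1, N.succ_pos, hN.mono N.le_succ⟩

theorem multiRamsey_pos (k : Fin r → ℕ) : 0 < multiRamsey k :=
  (multiRamsey_mem k).1

theorem lt_multiRamsey_iff (hN : 0 < N) : N < multiRamsey k ↔ ¬ ramseyProp k N :=
  ⟨fun hlt h => Nat.notMem_of_lt_sInf hlt ⟨hN, h⟩,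
    fun h => lt_of_not_ge fun hle => h ((multiRamsey_mem k).2.mono hle)⟩

theorem two_le_multiRamsey [NeZero r] (hk : ∀ i, 2 ≤ k i) : 2 ≤ multiRamsey k :=
  (lt_multiRamsey_iff one_pos).2 <| not_ramseyProp_iff_exists_cliqueFree.2
    ⟨fun _ => 0, fun i => SimpleGraph.cliqueFree_of_card_lt ((Fintype.card_fin 1).trans_lt (hk i))⟩

theorem pred_mul_pred_lt_multiRamsey_append (k : Fin r → ℕ) (l : Fin s → ℕ) :
    (multiRamsey k - 1) * (multiRamsey l - 1) < multiRamsey (Fin.append k l) := by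
  obtain hzero | hpos := Nat.eq_zero_or_pos ((multiRamsey k - 1) * (multiRamsey l - 1))
  · exact hzero ▸ multiRamsey_pos _
  have hk := Nat.pos_of_mul_pos_right hpos
  have hl := Nat.pos_of_mul_pos_left hpos
  exact (lt_multiRamsey_iff hpos).2 <| not_ramseyProp_append
    ((lt_multiRamsey_iff hk).1 (Nat.pred_lt_of_lt (Nat.lt_of_sub_pos hk)))
    ((lt_multiRamsey_iff hl).1 (Nat.pred_lt_of_lt (Nat.lt_of_sub_pos hl)))

theorem multiRamsey_mul_le_four_mul_append [NeZero r] [NeZero s] {l : Fin s → ℕ}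
    (hk : ∀ i, 2 ≤ k i) (hl : ∀ i, 2 ≤ l i) :
    multiRamsey k * multiRamsey l ≤ 4 * multiRamsey (Fin.append k l) := by
  have hk' := two_le_multiRamsey hk
  have hl' := two_le_multiRamsey hl
  calc multiRamsey k * multiRamsey l
      ≤ (2 * (multiRamsey k - 1)) * (2 * (multiRamsey l - 1)) :=
        Nat.mul_le_mul (by omega) (by omega)
    _ = 4 * ((multiRamsey k - 1) * (multiRamsey l - 1)) := by ring
    _ ≤ 4 * multiRamsey (Fin.append k l) :=
        Nat.mul_le_mul_left 4 (pred_mul_pred_lt_multiRamsey_append k l).le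

end MultiRamsey

section DecreasingConjecture

variable {r s : ℕ}

theorem DC.multiRamsey_append_update_le (hDC : DC) {k : Fin r → ℕ} {l : Fin s → ℕ}
    (hk : ∀ i, 2 ≤ k i) (hl : ∀ j, 2 ≤ l j) {i : Fin r} {j : Fin s} (hi : 3 ≤ k i)
    (hij : k i ≤ l j) :
    multiRamsey (Fin.append (Function.update k i (k i - 1)) (Function.update l j (l j + 1))) ≤
      multiRamsey (Fin.append k l) := by
  have hne (a : Fin r) (b : Fin s) : a.castAdd s ≠ b.natAdd r :=
    Fin.ne_of_val_ne (a.isLt.trans_le (Nat.le_add_right r b)).ne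
  have hshift := hDC (r + s) (Nat.add_le_add i.pos j.pos) (Fin.append k l)
    (Fin.addCases (by simpa using hk) (by simpa using hl)) (i.castAdd s) (j.natAdd r)
    (hne i j) (by simpa using hi) (by simpa using hij)
  convert hshift using 2
  funext x
  refine Fin.addCases (fun a => ?_) (fun b => ?_) x
  · simp [Function.update_apply, hne]
  · simp [Function.update_apply, (hne _ _).symm]

theorem DC.multiRamsey_append_piecewise_le (hDC : DC) {k l : Fin r → ℕ} (hk : ∀ i, 3 ≤ k i)
    (hkl : ∀ i, k i ≤ l i) (A : Finset (Fin r)) :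
    multiRamsey (Fin.append (A.piecewise (fun i => k i - 1) k) (A.piecewise (fun i => l i + 1) l)) ≤
      multiRamsey (Fin.append k l) := by
  induction A using Finset.induction_on with
  | empty => simp
  | insert a A ha ih =>
    have hka : A.piecewise (fun i => k i - 1) k a = k a := Finset.piecewise_eq_of_notMem _ _ _ ha
    have hla : A.piecewise (fun i => l i + 1) l a = l a := Finset.piecewise_eq_of_notMem _ _ _ ha
    have hk_two (i : Fin r) : 2 ≤ A.piecewise (fun i => k i - 1) k i := by
      have := hk i
      rw [Finset.piecewise]
      split_ifs <;> omega
    have hl_two (i : Fin r) : 2 ≤ A.piecewise (fun i => l i + 1) l i := by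
      have hl : 3 ≤ l i := (hk i).trans (hkl i)
      rw [Finset.piecewise]
      split_ifs <;> omega
    have hstep := hDC.multiRamsey_append_update_le hk_two hl_two (hka ▸ hk a) (hka ▸ hla ▸ hkl a)
    rw [hka, hla] at hstep
    rw [Finset.piecewise_insert, Finset.piecewise_insert]
    exact hstep.trans ih

theorem DC.multiRamsey_append_pred_succ_le (hDC : DC) {k l : Fin r → ℕ} (hk : ∀ i, 3 ≤ k i)
    (hkl : ∀ i, k i ≤ l i) :
    multiRamsey (Fin.append (fun i => k i - 1) (fun i => l i + 1)) ≤
      multiRamsey (Fin.append k l) := by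
  simpa using hDC.multiRamsey_append_piecewise_le hk hkl Finset.univ

theorem DC.diagRamsey_pred_mul_succ_le (hDC : DC) [NeZero r] {k : ℕ} (hk : 3 ≤ k) :
    diagRamsey r (k - 1) * diagRamsey r (k + 1) ≤ 4 * diagRamsey (r + r) k :=
  calc diagRamsey r (k - 1) * diagRamsey r (k + 1)
      ≤ 4 * multiRamsey (Fin.append (fun _ : Fin r => k - 1) (fun _ : Fin r => k + 1)) :=
        multiRamsey_mul_le_four_mul_append (fun _ => by omega) (fun _ => by omega)
    _ ≤ 4 * multiRamsey (Fin.append (fun _ : Fin r => k) (fun _ : Fin r => k)) :=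
        Nat.mul_le_mul_left 4 (hDC.multiRamsey_append_pred_succ_le (fun _ => hk) fun _ => le_rfl)
    _ = 4 * diagRamsey (r + r) k := by rw [Fin.append_castAdd_natAdd (f := fun _ => k), diagRamsey]

end DecreasingConjecture

section RootLimits

variable {a b c : ℕ → ℝ≥0∞} {x y z : ℝ≥0∞}

theorem one_le_of_tendsto_rpow_one_div (ha : ∀ r, 1 ≤ a r)
    (hx : Tendsto (fun r : ℕ => a r ^ (1 / (r : ℝ))) atTop (𝓝 x)) : 1 ≤ x :=
  ge_of_tendsto' hx fun r => (ENNReal.one_rpow _).ge.trans <|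
    ENNReal.rpow_le_rpow (ha r) (by positivity)

theorem tendsto_coe_rpow_one_div_atTop {K : NNReal} (hK : K ≠ 0) :
    Tendsto (fun r : ℕ => (K : ℝ≥0∞) ^ (1 / (r : ℝ))) atTop (𝓝 1) := by
  have hroot : Tendsto (fun r : ℕ => K ^ (1 / (r : ℝ))) atTop (𝓝 (K ^ (0 : ℝ))) :=
    tendsto_const_nhds.nnrpow tendsto_one_div_atTop_nhds_zero_nat (Or.inl hK)
  simpa [ENNReal.coe_rpow_of_ne_zero hK] using ENNReal.tendsto_coe.2 hroot

theorem tendsto_add_self_rpow_one_div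
    (hz : Tendsto (fun r : ℕ => c r ^ (1 / (r : ℝ))) atTop (𝓝 z)) :
    Tendsto (fun r : ℕ => c (r + r) ^ (1 / (r : ℝ))) atTop (𝓝 (z ^ 2)) := by
  have hdouble : Tendsto (fun r : ℕ => r + r) atTop atTop :=
    tendsto_id.atTop_add_atTop tendsto_id
  refine (ENNReal.Tendsto.pow (n := 2) (hz.comp hdouble)).congr fun r => ?_
  rw [Function.comp_apply, ← ENNReal.rpow_mul_natCast]
  congr 1
  push_cast
  ring

theorem mul_le_sq_of_tendsto_rpow_one_div {K : NNReal} (hK : K ≠ 0)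
    (habc : ∀ᶠ r in atTop, a r * b r ≤ K * c (r + r)) (hx₀ : x ≠ 0) (hy₀ : y ≠ 0)
    (hx : Tendsto (fun r : ℕ => a r ^ (1 / (r : ℝ))) atTop (𝓝 x))
    (hy : Tendsto (fun r : ℕ => b r ^ (1 / (r : ℝ))) atTop (𝓝 y))
    (hz : Tendsto (fun r : ℕ => c r ^ (1 / (r : ℝ))) atTop (𝓝 z)) :
    x * y ≤ z ^ 2 := by
  have hleft := ENNReal.Tendsto.mul hx (Or.inl hx₀) hy (Or.inl hy₀)
  have hright := ENNReal.Tendsto.mul (tendsto_coe_rpow_one_div_atTop hK) (Or.inl one_ne_zero)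
    (tendsto_add_self_rpow_one_div hz) (Or.inr ENNReal.one_ne_top)
  rw [one_mul] at hright
  refine le_of_tendsto_of_tendsto hleft hright ?_
  filter_upwards [habc] with r hr
  have hexp : (0 : ℝ) ≤ 1 / r := by positivity
  rw [← ENNReal.mul_rpow_of_nonneg _ _ hexp, ← ENNReal.mul_rpow_of_nonneg _ _ hexp]
  exact ENNReal.rpow_le_rpow hr hexp

end RootLimits

/-- if DC holds then `L_k² ≥ L_{k−1} · L_{k+1}` in `[0, ∞]`,
where `L j` is the limit of `r ↦ R_r(j)^{1/r}` in `[0, ∞]`. -/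
theorem stmt5 (hDC : DC) (L : ℕ → ℝ≥0∞)
    (hL : ∀ j, 2 ≤ j →
      Tendsto (fun r : ℕ => ((diagRamsey r j : ℝ≥0∞)) ^ (1 / (r : ℝ))) atTop (𝓝 (L j)))
    (k : ℕ) (hk : 3 ≤ k) :
    L (k - 1) * L (k + 1) ≤ (L k) ^ 2 := by
  have hne (j : ℕ) (hj : 2 ≤ j) : L j ≠ 0 :=
    (one_pos.trans_le <| one_le_of_tendsto_rpow_one_div
      (fun r => by exact_mod_cast multiRamsey_pos (fun _ : Fin r => j)) (hL j hj)).ne'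
  have hmul : ∀ᶠ r : ℕ in atTop, (diagRamsey r (k - 1) : ℝ≥0∞) * diagRamsey r (k + 1) ≤
      (4 : NNReal) * diagRamsey (r + r) k := by
    filter_upwards [eventually_ne_atTop 0] with r hr
    have : NeZero r := ⟨hr⟩
    exact_mod_cast hDC.diagRamsey_pred_mul_succ_le (r := r) hk
  exact mul_le_sq_of_tendsto_rpow_one_div four_ne_zero hmul (hne _ (by omega)) (hne _ (by omega))
    (hL _ (by omega)) (hL _ (by omega)) (hL k (by omega))
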